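/- Let P be a set of 2n points in the plane in general position such that the complete geometric graph K(P) contains a crossing family of size n (a set of n pairwise crossing edges, necessarily a perfect matching of P), and let k ≥ 3 be an integer. Then the edge set of K(P) can be partitioned into ⌈n/(k−1)⌉ classes such that each class, viewed as a geometric graph on P, is k-quasi-plane; moreover every partition of the edge set of K(P) into k-quasi-plane classes uses at least ⌈n/(k−1)⌉ classes. -/

import Mathlib

/-- Points of the plane. -/
abbrev Pt : Type := ℝ × ℝ

/-- A finite point set is in general position if no three of its points are collinear. -/
def GenPos (P : Finset Pt) : Prop :=
  ∀ p ∈ P, ∀ q ∈ P, ∀ r ∈ P, p ≠ q → p ≠ r → q ≠ r →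
    ¬ Collinear ℝ ({p, q, r} : Set Pt)

/-- A finite point set is in convex position: general position and no point lies in the
convex hull of the others. -/
def ConvexPos (P : Finset Pt) : Prop :=
  GenPos P ∧ ∀ p ∈ P, p ∉ convexHull ℝ ((P.erase p : Finset Pt) : Set Pt)

/-- The edge set of the complete geometric graph on `P`: all unordered pairs of
distinct points of `P`. -/
def KEdges (P : Finset Pt) : Set (Sym2 Pt) :=
  {e | ∃ p ∈ P, ∃ q ∈ P, p ≠ q ∧ e = s(p, q)}

/-- Two edges cross: they share no endpoint and their open segments intersect. -/
def Cross (e f : Sym2 Pt) : Prop :=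
  (∀ x, x ∈ e → x ∉ f) ∧
    ∃ p q r s : Pt, e = s(p, q) ∧ f = s(r, s) ∧
      (openSegment ℝ p q ∩ openSegment ℝ r s).Nonempty

/-- A set of edges is `k`-plane if each of its edges crosses at most `k` other edges
of the set. -/
def KPlane (k : ℕ) (E : Set (Sym2 Pt)) : Prop :=
  ∀ e ∈ E, {f | f ∈ E ∧ Cross e f}.ncard ≤ k

/-- A set of edges is `k`-quasi-plane if it contains no `k` pairwise crossing edges. -/
def KQuasiPlane (k : ℕ) (E : Set (Sym2 Pt)) : Prop :=
  ¬ ∃ S : Finset (Sym2 Pt), ↑S ⊆ E ∧ S.card = k ∧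
      (S : Set (Sym2 Pt)).Pairwise Cross

/-- The set of crossing pairs (unordered) of a set of edges. -/
def CrossPairs (E : Set (Sym2 Pt)) : Set (Sym2 (Sym2 Pt)) :=
  {c | ∃ e ∈ E, ∃ f ∈ E, Cross e f ∧ c = s(e, f)}

/-- A crossing family in `K(P)`: a finite set of pairwise crossing edges of `K(P)`. -/
def CrossingFamily (P : Finset Pt) (S : Finset (Sym2 Pt)) : Prop :=
  ↑S ⊆ KEdges P ∧ (S : Set (Sym2 Pt)).Pairwise Cross

/-- `E` forms a spanning tree on the point set `P`: all edges are edges of `K(P)` and the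
corresponding graph on the points of `P` is connected and acyclic. -/
def IsSpanningTreeOn (P : Finset Pt) (E : Set (Sym2 Pt)) : Prop :=
  E ⊆ KEdges P ∧
    (SimpleGraph.fromRel (fun a b : {x // x ∈ P} => s((a : Pt), (b : Pt)) ∈ E)).IsTree

/-- Signed area: positive iff `c` is to the left of the directed line `a → b`. -/
def orient (a b c : Pt) : ℝ := (b.1 - a.1) * (c.2 - a.2) - (b.2 - a.2) * (c.1 - a.1)

/-- The double star of a matching edge `m = s(x, xP)`. -/
def DStar (m : Sym2 Pt) : Set (Sym2 Pt) :=
  {e | e = m ∨ ∃ x xP y, m = s(x, xP) ∧ e = s(x, y) ∧ 0 < orient x xP y}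

theorem orient_swap (a b c : Pt) : orient b a c = - orient a b c := by
  unfold orient; ring

theorem collinear_of_orient (a b c : Pt) (hab : a ≠ b) (h : orient a b c = 0) :
    Collinear ℝ ({a, b, c} : Set Pt) := by
  rw [collinear_iff_of_mem (p₀ := a) (by simp)]
  refine ⟨b - a, ?_⟩
  intro p hp
  simp only [Set.mem_insert_iff, Set.mem_singleton_iff] at hp
  rcases hp with rfl | rfl | rfl
  · exact ⟨0, by simp⟩
  · exact ⟨1, by simp⟩
  · unfold orient at h
    by_cases h1 : b.1 - a.1 = 0
    · have h2 : b.2 - a.2 ≠ 0 := fun h2 => hab (Prod.ext (by linarith) (by linarith))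
      refine ⟨(p.2 - a.2) / (b.2 - a.2), ?_⟩
      rw [h1] at h
      have h3 : p.1 - a.1 = 0 := by
        have : (b.2 - a.2) * (p.1 - a.1) = 0 := by linarith
        exact (mul_eq_zero.1 this).resolve_left h2
      ext
      · simp [h1]; linarith
      · simp; field_simp; ring
    · refine ⟨(p.1 - a.1) / (b.1 - a.1), ?_⟩
      ext
      · simp; field_simp; ring
      · simp; field_simp; linarith

theorem cross_seg {x xP y yP : Pt} (h : Cross s(x, xP) s(y, yP)) :
    (openSegment ℝ x xP ∩ openSegment ℝ y yP).Nonempty := by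
  obtain ⟨-, p, q, r, s, h1, h2, h3⟩ := h
  rw [Sym2.eq_iff] at h1 h2
  rcases h1 with ⟨rfl, rfl⟩ | ⟨rfl, rfl⟩ <;> rcases h2 with ⟨rfl, rfl⟩ | ⟨rfl, rfl⟩
  · exact h3
  · rwa [openSegment_symm ℝ y]
  · rwa [openSegment_symm ℝ x]
  · rwa [openSegment_symm ℝ x, openSegment_symm ℝ y]

theorem cross_orient {x xP y yP : Pt} (h : Cross s(x, xP) s(y, yP))
    (h0 : orient x xP y < 0) : 0 < orient y yP x := by
  obtain ⟨z, ⟨a, t, ha, ht, hat, hz⟩, ⟨b, s, hb, hs, hbs, hzP⟩⟩ := cross_seg h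
  have e1 := congrArg Prod.fst (hz.trans hzP.symm)
  have e2 := congrArg Prod.snd (hz.trans hzP.symm)
  simp at e1 e2
  obtain rfl : a = 1 - t := by linarith
  obtain rfl : b = 1 - s := by linarith
  have f1 : orient x xP y
      = -s * ((xP.1 - x.1) * (yP.2 - y.2) - (xP.2 - x.2) * (yP.1 - y.1)) := by
    unfold orient
    linear_combination (xP.2 - x.2) * e1 - (xP.1 - x.1) * e2
  have f2 : orient y yP x
      = t * ((xP.1 - x.1) * (yP.2 - y.2) - (xP.2 - x.2) * (yP.1 - y.1)) := by
    unfold orient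
    linear_combination (-(yP.2 - y.2)) * e1 + (yP.1 - y.1) * e2
  rw [f2]
  refine mul_pos ht ?_
  by_contra hc
  rw [f1] at h0
  nlinarith

theorem orient_open {a b c z : Pt} (h : 0 < orient a b c) (hz : z ∈ openSegment ℝ a c) :
    0 < orient a b z := by
  obtain ⟨u, t, hu, ht, hut, rfl⟩ := hz
  obtain rfl : u = 1 - t := by linarith
  have : orient a b ((1 - t) • a + t • c) = t * orient a b c := by
    unfold orient; simp; ring
  rw [this]; exact mul_pos ht h

theorem dstar_plane {m e f : Sym2 Pt} (he : e ∈ DStar m) (hf : f ∈ DStar m) :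
    ¬ Cross e f := by
  intro hc
  rcases he with rfl | ⟨x, xP, y, rfl, rfl, h1⟩
  · rcases hf with rfl | ⟨x, xP, y, rfl, rfl, h1⟩
    · induction f using Sym2.ind with
      | _ a b => exact hc.1 a (by simp) (by simp)
    · exact hc.1 x (by simp) (by simp)
  · rcases hf with rfl | ⟨w, wP, v, hm, rfl, h2⟩
    · exact hc.1 x (by simp) (by simp)
    · rw [Sym2.eq_iff] at hm
      rcases hm with ⟨rfl, rfl⟩ | ⟨rfl, rfl⟩
      · exact hc.1 x (by simp) (by simp)
      · obtain ⟨z, hz1, hz2⟩ := cross_seg hc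
        have a1 := orient_open h1 hz1
        have a2 := orient_open h2 hz2
        rw [orient_swap] at a2
        linarith

theorem matching_cover (n : ℕ) (P : Finset Pt) (hcard : P.card = 2 * n)
    (S : Finset (Sym2 Pt)) (hS : CrossingFamily P S) (hn : S.card = n) :
    ∀ x ∈ P, ∃ e ∈ S, x ∈ e := by
  classical
  have hsub : S.biUnion (fun e => e.toFinset) ⊆ P := by
    intro x hx
    simp only [Finset.mem_biUnion, Sym2.mem_toFinset] at hx
    obtain ⟨e, he, hx⟩ := hx
    obtain ⟨p, hp, q, hq, -, rfl⟩ := hS.1 he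
    rcases Sym2.mem_iff.1 hx with rfl | rfl <;> assumption
  have hc : (S.biUnion (fun e => e.toFinset)).card = 2 * n := by
    rw [Finset.card_biUnion]
    · rw [Finset.sum_const_nat (m := 2), hn, mul_comm]
      intro e he
      obtain ⟨p, hp, q, hq, hpq, rfl⟩ := hS.1 he
      exact Sym2.card_toFinset_of_not_isDiag _ (by simpa using hpq)
    · intro e he f hf hef
      refine Finset.disjoint_left.2 ?_
      intro x hx hxP
      rw [Sym2.mem_toFinset] at hx hxP
      exact (hS.2 he hf hef).1 x hx hxP
  have heq := Finset.eq_of_subset_of_card_le hsub (by omega)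
  intro x hx
  rw [← heq] at hx
  simpa using hx

theorem dstar_cover (n : ℕ) (P : Finset Pt) (hP : GenPos P) (hcard : P.card = 2 * n)
    (S : Finset (Sym2 Pt)) (hS : CrossingFamily P S) (hn : S.card = n) :
    ∀ e ∈ KEdges P, ∃ m ∈ S, e ∈ DStar m := by
  rintro e ⟨x, hx, y, hy, hxy, rfl⟩
  obtain ⟨m, hm, hxm⟩ := matching_cover n P hcard S hS hn x hx
  obtain ⟨l, hl, hyl⟩ := matching_cover n P hcard S hS hn y hy
  obtain ⟨xP, rfl⟩ := Sym2.mem_iff_exists.1 hxm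
  obtain ⟨yP, rfl⟩ := Sym2.mem_iff_exists.1 hyl
  by_cases hml : s(x, xP) = s(y, yP)
  · refine ⟨_, hm, Or.inl ?_⟩
    rw [hml] at hxm
    rw [hml]
    rcases Sym2.mem_iff.1 hxm with rfl | rfl
    · exact absurd rfl hxy
    · exact Sym2.eq_swap
  · have hc := hS.2 hm hl hml
    have hxP : xP ∈ P ∧ x ≠ xP := by
      obtain ⟨p, hp, q, hq, hpq, h⟩ := hS.1 hm
      rcases Sym2.eq_iff.1 h with ⟨rfl, rfl⟩ | ⟨rfl, rfl⟩
      · exact ⟨hq, hpq⟩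
      · exact ⟨hp, hpq.symm⟩
    have hxPy : xP ≠ y := by
      rintro rfl
      exact hc.1 xP (by simp) (by simp)
    rcases lt_trichotomy (orient x xP y) 0 with h | h | h
    · exact ⟨_, hl, Or.inr ⟨y, yP, x, rfl, Sym2.eq_swap, cross_orient hc h⟩⟩
    · exact absurd (collinear_of_orient x xP y hxP.2 h)
        (hP x hx xP hxP.1 y hy hxP.2 hxy hxPy)
    · exact ⟨_, hm, Or.inr ⟨x, xP, y, rfl, rfl, h⟩⟩

/-- for `2n` points in general position admitting a crossing family of size
`n` and `k ≥ 3`, `K(P)` can be partitioned into `⌈n/(k-1)⌉` `k`-quasi-plane classes, and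
every partition of `K(P)` into `k`-quasi-plane classes uses at least `⌈n/(k-1)⌉` classes. -/
theorem stmt_13 (n : ℕ) (P : Finset Pt) (hP : GenPos P) (hcard : P.card = 2 * n)
    (hcf : ∃ S : Finset (Sym2 Pt), CrossingFamily P S ∧ S.card = n)
    (k : ℕ) (hk3 : 3 ≤ k) :
    (∃ F : Fin (⌈(n : ℝ) / ((k : ℝ) - 1)⌉₊) → Set (Sym2 Pt),
      (⋃ i, F i) = KEdges P ∧
      (Pairwise fun i j => Disjoint (F i) (F j)) ∧
      (∀ i, KQuasiPlane k (F i))) ∧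
    (∀ (c : ℕ) (F : Fin c → Set (Sym2 Pt)),
      (⋃ i, F i) = KEdges P →
      (Pairwise fun i j => Disjoint (F i) (F j)) →
      (∀ i, KQuasiPlane k (F i)) →
      ⌈(n : ℝ) / ((k : ℝ) - 1)⌉₊ ≤ c) := by
  classical
  obtain ⟨S, hS, hn⟩ := hcf
  obtain ⟨m, rfl⟩ : ∃ m, k = m + 1 := ⟨k - 1, by omega⟩
  have hm : 0 < m := by omega
  have hmR : (0 : ℝ) < m := by exact_mod_cast hm
  have hk : ((m + 1 : ℕ) : ℝ) - 1 = m := by push_cast; ring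
  rw [hk]
  constructor
  · have hcov := dstar_cover n P hP hcard S hS hn
    choose! g hgS hgD using hcov
    obtain ⟨idx, hlt, hinj⟩ : ∃ idx : Sym2 Pt → ℕ, (∀ e ∈ S, idx e < n) ∧
        (∀ e ∈ S, ∀ f ∈ S, idx e = idx f → e = f) := by
      refine ⟨fun e => if h : e ∈ S then (S.equivFin ⟨e, h⟩ : ℕ) else 0, ?_, ?_⟩
      · intro e he
        simp only [he, dif_pos]
        exact lt_of_lt_of_eq (Fin.is_lt _) hn
      · intro e he f hf h
        simp only [he, hf, dif_pos] at h
        have := S.equivFin.injective (Fin.ext h)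
        exact congrArg Subtype.val this
    refine ⟨fun i => {e | e ∈ KEdges P ∧ idx (g e) / m = i}, ?_, ?_, ?_⟩
    · ext e
      simp only [Set.mem_iUnion, Set.mem_ofPred_eq]
      constructor
      · rintro ⟨i, h, -⟩; exact h
      · intro h
        have h2 : idx (g e) / m < ⌈(n : ℝ) / m⌉₊ := by
          rw [Nat.lt_ceil, lt_div_iff₀ hmR]
          have h3 := Nat.div_mul_le_self (idx (g e)) m
          have h4 := hlt _ (hgS e h)
          exact_mod_cast lt_of_le_of_lt h3 h4
        exact ⟨⟨_, h2⟩, h, rfl⟩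
    · intro i j hij
      rw [Set.disjoint_left]
      rintro e ⟨-, h1⟩ ⟨-, h2⟩
      exact hij (Fin.ext (h1.symm.trans h2))
    · rintro i ⟨T, hT, hTc, hTx⟩
      have hmaps : ∀ e ∈ T, idx (g e) ∈ Finset.Ico ((i : ℕ) * m) ((i : ℕ) * m + m) := by
        intro e he
        have h1 := (hT he).2
        rw [Finset.mem_Ico, ← h1]
        exact ⟨Nat.div_mul_le_self _ _, Nat.lt_div_mul_add hm⟩
      obtain ⟨e, he, f, hf, hef, h⟩ :=
        Finset.exists_ne_map_eq_of_card_lt_of_maps_to (by simp [hTc]) hmaps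
      have heP := (hT he).1
      have hfP := (hT hf).1
      have hg := hinj _ (hgS e heP) _ (hgS f hfP) h
      have hd := hgD f hfP
      rw [← hg] at hd
      exact dstar_plane (hgD e heP) hd (hTx he hf hef)
  · intro c F hU _ hQ
    rw [Nat.ceil_le, div_le_iff₀ hmR]
    have hex : ∀ e ∈ S, ∃ i, e ∈ F i := by
      intro e he
      have := hS.1 he
      rw [← hU] at this
      exact Set.mem_iUnion.1 this
    have key : S.card ≤ m * c := by
      choose φ hφ using hex
      have := Finset.card_le_mul_card_image_of_maps_to (s := S.attach)
        (t := (Finset.univ : Finset (Fin c))) (f := fun e => φ e.1 e.2)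
        (fun _ _ => Finset.mem_univ _) m ?_
      · simpa using this
      · intro i _
        by_contra hlt
        push Not at hlt
        obtain ⟨T, hT, hTc⟩ := Finset.exists_subset_card_eq (Nat.succ_le_of_lt hlt)
        refine hQ i ⟨T.map (Function.Embedding.subtype _), ?_, by simpa using hTc, ?_⟩
        · intro e he
          simp only [Finset.coe_map, Set.mem_image, Finset.mem_coe] at he
          obtain ⟨⟨a, ha⟩, haT, rfl⟩ := he
          have := (Finset.mem_filter.1 (hT haT)).2
          simp only at this
          rw [← this]
          exact hφ a ha
        · intro e he f hf hef
          simp only [Finset.coe_map, Set.mem_image, Finset.mem_coe] at he hf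
          obtain ⟨⟨a, ha⟩, haT, rfl⟩ := he
          obtain ⟨⟨b, hb⟩, hbT, rfl⟩ := hf
          exact hS.2 ha hb hef
    rw [hn] at key
    rw [mul_comm]
    exact_mod_cast key
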